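/- arXiv:math/0503033 — 4 statements merged into one kernel-verified Lean document; each statement's English description precedes it below -/
import Mathlib

section
/- For every w = (w₁,w₂,w₃,w₄) ∈ ℝ⁴ with ‖w‖ = 1 and (w₂,w₃) ≠ (0,0), there exists (q,p,z) ∈ ℝ³ with f(q,p,z) = w. In other words, the image of f is exactly S³ \ K₀. -/
open Real

/-- λ(q,p,z) = (1 + p²/4 + z²)^(−1/2) -/
noncomputable def lam (q p z : ℝ) : ℝ := (Real.sqrt (1 + p ^ 2 / 4 + z ^ 2))⁻¹

/-- f(q,p,z) = λ·(p/2·sin q − z·cos q, cos q, sin q, p/2·cos q + z·sin q) ∈ ℝ⁴ -/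
noncomputable def f (q p z : ℝ) : EuclideanSpace ℝ (Fin 4) :=
  lam q p z •
    (WithLp.equiv 2 (Fin 4 → ℝ)).symm
      ![p / 2 * Real.sin q - z * Real.cos q, Real.cos q, Real.sin q,
        p / 2 * Real.cos q + z * Real.sin q]

/-! With `a = w₂ + i w₃` and `b = w₄ + i w₁`, the map `f` becomes
`(q, p, z) ↦ λ (e^{iq}, ζ e^{iq})` where `ζ = p/2 - i z` and `λ = (1 + |ζ|²)^(-1/2)`, and `K₀` is
the circle `a = 0`. So on the sphere away from `K₀`, `f` is inverted by `q = arg a`, `ζ = b / a`,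
because `1 + |b / a|² = |a|⁻²`. -/

/-- The point of `ℝ⁴` with complex coordinates `a = w₂ + i w₃` and `b = w₄ + i w₁`; this pairing of
the real coordinates is the one for which both complex coordinates of `f` are multiples of
`e^{iq}`. Here `wᵢ` is numbered from `1`, so `w₁` is `w 0` in Lean. -/
def ofComplexPair (a b : ℂ) : EuclideanSpace ℝ (Fin 4) := !₂[b.im, a.re, a.im, b.re]

lemma norm_ofComplexPair_sq (a b : ℂ) : ‖ofComplexPair a b‖ ^ 2 = ‖a‖ ^ 2 + ‖b‖ ^ 2 := by
  simp only [ofComplexPair, EuclideanSpace.real_norm_sq_eq, Fin.sum_univ_four, Complex.sq_norm,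
    Complex.normSq_apply, Matrix.cons_val]
  ring

lemma ofComplexPair_mk (w : EuclideanSpace ℝ (Fin 4)) :
    ofComplexPair ⟨w 1, w 2⟩ ⟨w 3, w 0⟩ = w := by
  ext i
  fin_cases i <;> rfl

lemma lam_two_mul_re_neg_im (q : ℝ) (ζ : ℂ) :
    lam q (2 * ζ.re) (-ζ.im) = (√(1 + ‖ζ‖ ^ 2))⁻¹ := by
  rw [lam, Complex.sq_norm, Complex.normSq_apply]
  ring_nf

lemma f_two_mul_re_neg_im (q : ℝ) (ζ : ℂ) :
    f q (2 * ζ.re) (-ζ.im) =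
      ofComplexPair (((√(1 + ‖ζ‖ ^ 2))⁻¹ : ℝ) * Complex.exp (q * Complex.I))
        (ζ * (((√(1 + ‖ζ‖ ^ 2))⁻¹ : ℝ) * Complex.exp (q * Complex.I))) := by
  rw [f, lam_two_mul_re_neg_im]
  generalize (√(1 + ‖ζ‖ ^ 2))⁻¹ = l
  ext i
  fin_cases i <;> simp [ofComplexPair, Complex.exp_re, Complex.exp_im] <;> ring

lemma inv_sqrt_one_add_norm_div_sq {a b : ℂ} (ha : a ≠ 0) (hab : ‖a‖ ^ 2 + ‖b‖ ^ 2 = 1) :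
    (√(1 + ‖b / a‖ ^ 2))⁻¹ = ‖a‖ := by
  have hnorm : ‖a‖ ≠ 0 := norm_ne_zero_iff.mpr ha
  have hsum : 1 + ‖b / a‖ ^ 2 = (‖a‖⁻¹) ^ 2 := by
    rw [norm_div]
    field_simp
    exact hab
  rw [hsum, sqrt_sq (by positivity), inv_inv]

lemma f_arg_div {a b : ℂ} (ha : a ≠ 0) (hab : ‖a‖ ^ 2 + ‖b‖ ^ 2 = 1) :
    f a.arg (2 * (b / a).re) (-(b / a).im) = ofComplexPair a b := by
  rw [f_two_mul_re_neg_im, inv_sqrt_one_add_norm_div_sq ha hab,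
    Complex.norm_mul_exp_arg_mul_I, div_mul_cancel₀ b ha]

/-- Every point of S³ \ K₀ is in the image of f. -/
theorem f_surjective_onto_sphere_minus_K0 (w : EuclideanSpace ℝ (Fin 4))
    (hw : ‖w‖ = 1) (hK : ¬(w 1 = 0 ∧ w 2 = 0)) :
    ∃ q p z : ℝ, f q p z = w := by
  let a : ℂ := ⟨w 1, w 2⟩
  let b : ℂ := ⟨w 3, w 0⟩
  have hwab : ofComplexPair a b = w := ofComplexPair_mk w
  have ha : a ≠ 0 := fun h ↦ hK (Complex.ext_iff.mp h)
  have hab : ‖a‖ ^ 2 + ‖b‖ ^ 2 = 1 := by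
    rw [← norm_ofComplexPair_sq, hwab, hw, one_pow]
  exact ⟨a.arg, 2 * (b / a).re, -(b / a).im, (f_arg_div ha hab).trans hwab⟩
end

section
/- For all (q,p,z), (q',p',z') ∈ ℝ³, one has f(q,p,z) = f(q',p',z') if and only if p = p', z = z', and q' − q is an integer multiple of 2π. In particular f descends to an injective map on (ℝ/2πℤ) × ℝ². -/
open Real

/-!
Read `(v₀, v₁, v₂, v₃) ∈ ℝ⁴` as `(v₁ + v₂ i, v₃ + v₀ i) ∈ ℂ²`. In these coordinates
`f(q, p, z) = λ e^{iq} (1, p/2 - z i)`. The ratio of the two complex coordinates recovers `p` and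
`z`, hence `λ`, and the first coordinate then recovers `e^{iq}`.
-/

theorem smul_one_mk_eq_smul_one_mk_iff {M₀ : Type*} [MulZeroOneClass M₀] [IsLeftCancelMulZero M₀]
    {c c' w w' : M₀} (hc : c ≠ 0) :
    c • ((1 : M₀), w) = c' • ((1 : M₀), w') ↔ c = c' ∧ w = w' := by
  simp only [Prod.smul_mk, smul_eq_mul, mul_one, Prod.mk.injEq]
  refine and_congr_right ?_
  rintro rfl
  exact mul_right_inj' hc

/-- The identification of `ℝ⁴` with `ℂ²` whose first factor is the plane of coordinates `1` and `2`
and whose second factor is the plane of coordinates `3` and `0`, in these orders. With this pairing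
both complex coordinates of `f q p z` are multiples of `Circle.exp q`. -/
def toComplexPair (v : EuclideanSpace ℝ (Fin 4)) : ℂ × ℂ := (⟨v 1, v 2⟩, ⟨v 3, v 0⟩)

theorem toComplexPair_injective : Function.Injective toComplexPair := by
  intro v w h
  simp only [toComplexPair, Prod.mk.injEq, Complex.mk.injEq] at h
  obtain ⟨⟨h₁, h₂⟩, h₃, h₀⟩ := h
  ext i
  fin_cases i <;> assumption

/-- The point `p / 2 - z i` of `ℂ`, which is the ratio of the second complex coordinate of `f q p z`
to the first. -/
noncomputable def coordRatio (p z : ℝ) : ℂ := ⟨p / 2, -z⟩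

theorem coordRatio_inj {p z p' z' : ℝ} :
    coordRatio p z = coordRatio p' z' ↔ p = p' ∧ z = z' := by
  simp only [coordRatio, Complex.mk.injEq, neg_inj, div_left_inj' (two_ne_zero' ℝ)]

theorem ofReal_mul_circle_exp (r θ : ℝ) : (r * Circle.exp θ : ℂ) = ⟨r * cos θ, r * sin θ⟩ := by
  rw [Circle.coe_exp]
  apply Complex.ext
  · rw [Complex.re_ofReal_mul, Complex.exp_ofReal_mul_I_re]
  · rw [Complex.im_ofReal_mul, Complex.exp_ofReal_mul_I_im]

theorem toComplexPair_f (q p z : ℝ) :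
    toComplexPair (f q p z) = (lam q p z * Circle.exp q : ℂ) • (1, coordRatio p z) := by
  rw [ofReal_mul_circle_exp, Prod.smul_mk, smul_eq_mul, mul_one, smul_eq_mul]
  refine Prod.ext rfl (Complex.ext ?_ ?_)
  · change lam q p z * (p / 2 * cos q + z * sin q) =
      lam q p z * cos q * (p / 2) - lam q p z * sin q * -z
    ring
  · change lam q p z * (p / 2 * sin q - z * cos q) =
      lam q p z * cos q * -z + lam q p z * sin q * (p / 2)
    ring

theorem lam_pos (q p z : ℝ) : 0 < lam q p z := by
  unfold lam
  positivity

theorem circle_exp_eq_exp_iff_exists_sub_eq {x y : ℝ} :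
    Circle.exp x = Circle.exp y ↔ ∃ k : ℤ, y - x = 2 * π * k := by
  rw [eq_comm, Circle.exp_eq_exp]
  exact exists_congr fun k => by rw [sub_eq_iff_eq_add', mul_comm (k : ℝ)]

/-- f(q,p,z) = f(q',p',z') iff p = p', z = z' and q' − q ∈ 2πℤ. -/
theorem f_eq_iff (q p z q' p' z' : ℝ) :
    f q p z = f q' p' z' ↔
      p = p' ∧ z = z' ∧ ∃ k : ℤ, q' - q = 2 * Real.pi * k := by
  have lam_ne (q p z : ℝ) : (lam q p z : ℂ) ≠ 0 := Complex.ofReal_ne_zero.mpr (lam_pos q p z).ne'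
  have complex_coords : f q p z = f q' p' z' ↔
      (lam q p z * Circle.exp q : ℂ) = lam q' p' z' * Circle.exp q' ∧ p = p' ∧ z = z' := by
    rw [← toComplexPair_injective.eq_iff, toComplexPair_f, toComplexPair_f,
      smul_one_mk_eq_smul_one_mk_iff (mul_ne_zero (lam_ne q p z) (Circle.coe_ne_zero _)),
      coordRatio_inj]
  rw [complex_coords, and_comm, and_assoc]
  refine and_congr_right ?_
  rintro rfl
  refine and_congr_right ?_
  rintro rfl
  have lam_eq : lam q' p z = lam q p z := rfl
  rw [lam_eq, mul_right_inj' (lam_ne q p z), Circle.coe_inj, circle_exp_eq_exp_iff_exists_sub_eq]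
end

section
/- For every (q,x,y) ∈ ℝ³, one has f(q, −2x·sin(2q) − 2y·cos(2q), x·cos(2q) − y·sin(2q)) = g(q,x,y). That is, in the coordinates (q,x,y) defined by p = −2x·sin(2q) − 2y·cos(2q) and z = x·cos(2q) − y·sin(2q), the map f takes the form g. -/
open Real

/-- g(q,x,y) = (1+x²+y²)^(−1/2)·(−x·cos q + y·sin q, cos q, sin q, −x·sin q − y·cos q). -/
noncomputable def g (q x y : ℝ) : EuclideanSpace ℝ (Fin 4) :=
  (Real.sqrt (1 + x ^ 2 + y ^ 2))⁻¹ •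
    (WithLp.equiv 2 (Fin 4 → ℝ)).symm
      ![-x * Real.cos q + y * Real.sin q, Real.cos q, Real.sin q,
        -x * Real.sin q - y * Real.cos q]

/-!
Put `ζ = z - i p / 2` and `w = x + i y`. Under a suitable identification of `ℝ⁴` with `ℂ²`,
`f` is the normalization of `(-e^{-iq} ζ, e^{iq})` and `g` is the normalization of
`(-e^{iq} w, e^{iq})`, while the change of coordinates is the rotation `ζ = e^{2iq} w`.
-/

section

open Complex (I)

/-- The identification of `ℂ²` with `ℝ⁴` that puts the first complex coordinate in the outer two
real slots and the second in the inner two, so that the circle factor `(cos q, sin q)` of `f` and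
`g` is the second complex coordinate. -/
noncomputable def pairToReal (u v : ℂ) : EuclideanSpace ℝ (Fin 4) :=
  !₂[u.re, v.re, v.im, u.im]

lemma norm_pairToReal (u v : ℂ) : ‖pairToReal u v‖ = √(‖u‖ ^ 2 + ‖v‖ ^ 2) := by
  rw [EuclideanSpace.norm_eq, Complex.sq_norm, Complex.sq_norm, Complex.normSq_apply,
    Complex.normSq_apply]
  congr 1
  simp only [pairToReal, Real.norm_eq_abs, sq_abs, Fin.sum_univ_four, PiLp.toLp_apply,
    Matrix.cons_val]
  ring

lemma exp_ofReal_mul_I_mul_re (θ : ℝ) (w : ℂ) :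
    (Complex.exp (θ * I) * w).re = w.re * cos θ - w.im * sin θ := by
  rw [Complex.mul_re, Complex.exp_ofReal_mul_I_re, Complex.exp_ofReal_mul_I_im]
  ring

lemma exp_ofReal_mul_I_mul_im (θ : ℝ) (w : ℂ) :
    (Complex.exp (θ * I) * w).im = w.re * sin θ + w.im * cos θ := by
  rw [Complex.mul_im, Complex.exp_ofReal_mul_I_re, Complex.exp_ofReal_mul_I_im]
  ring

lemma norm_pairToReal_neg_exp_mul (θ q : ℝ) (w : ℂ) :
    ‖pairToReal (-(Complex.exp (θ * I) * w)) (Complex.exp (q * I))‖ =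
      √(1 + w.re ^ 2 + w.im ^ 2) := by
  rw [norm_pairToReal, norm_neg, norm_mul, Complex.norm_exp_ofReal_mul_I,
    Complex.norm_exp_ofReal_mul_I, one_mul, Complex.sq_norm, Complex.normSq_apply]
  ring_nf

lemma normalize_pairToReal_neg_exp_mul (θ q : ℝ) (w : ℂ) :
    NormedSpace.normalize
        (pairToReal (-(Complex.exp (θ * I) * w)) (Complex.exp (q * I))) =
      (√(1 + w.re ^ 2 + w.im ^ 2))⁻¹ •
        !₂[-(w.re * cos θ - w.im * sin θ), cos q, sin q,
          -(w.re * sin θ + w.im * cos θ)] := by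
  rw [NormedSpace.normalize, norm_pairToReal_neg_exp_mul, pairToReal, Complex.neg_re,
    Complex.neg_im, exp_ofReal_mul_I_mul_re, exp_ofReal_mul_I_mul_im,
    Complex.exp_ofReal_mul_I_re, Complex.exp_ofReal_mul_I_im]

lemma f_eq_normalize (q p z : ℝ) :
    f q p z = NormedSpace.normalize
      (pairToReal (-(Complex.exp ((-q : ℝ) * I) * ⟨z, -(p / 2)⟩)) (Complex.exp (q * I))) := by
  rw [normalize_pairToReal_neg_exp_mul, f, lam, WithLp.equiv_symm_apply, cos_neg, sin_neg]
  ring_nf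

lemma g_eq_normalize (q x y : ℝ) :
    g q x y = NormedSpace.normalize
      (pairToReal (-(Complex.exp (q * I) * ⟨x, y⟩)) (Complex.exp (q * I))) := by
  rw [normalize_pairToReal_neg_exp_mul, g, WithLp.equiv_symm_apply]
  ring_nf

lemma mk_coordinate_change_eq_exp_mul (θ x y : ℝ) :
    (⟨x * cos θ - y * sin θ, -((-2 * x * sin θ - 2 * y * cos θ) / 2)⟩ : ℂ) =
      Complex.exp (θ * I) * ⟨x, y⟩ := by
  apply Complex.ext
  · rw [exp_ofReal_mul_I_mul_re]
  · rw [exp_ofReal_mul_I_mul_im]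
    ring

end

/-- In the coordinates (q,x,y) with p = −2x·sin(2q) − 2y·cos(2q) and
z = x·cos(2q) − y·sin(2q), the map f takes the form g. -/
theorem f_in_qxy_coordinates (q x y : ℝ) :
    f q (-2 * x * Real.sin (2 * q) - 2 * y * Real.cos (2 * q))
      (x * Real.cos (2 * q) - y * Real.sin (2 * q)) = g q x y := by
  have rotation_comp : Complex.exp ((-q : ℝ) * Complex.I) *
      Complex.exp ((2 * q : ℝ) * Complex.I) = Complex.exp (q * Complex.I) := by
    rw [← Complex.exp_add, ← add_mul, ← Complex.ofReal_add, two_mul, neg_add_cancel_left]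
  rw [f_eq_normalize, g_eq_normalize, mk_coordinate_change_eq_exp_mul, ← mul_assoc,
    rotation_comp]
end

section
/- Define Φ : ℝ³ → ℝ³ by Φ(q,x,y) = (q, −2x·sin(2q) − 2y·cos(2q), x·cos(2q) − y·sin(2q)). Then for every (q,x,y) ∈ ℝ³ and every (a,b,c) ∈ ℝ³, writing (a',b',c') = DΦ(q,x,y)(a,b,c) for the Fréchet derivative of Φ and P = −2x·sin(2q) − 2y·cos(2q), one has c' − P·a' = cos(2q)·b − sin(2q)·c. That is, under the coordinate change p = −2x·sin(2q) − 2y·cos(2q), z = x·cos(2q) − y·sin(2q), the 1-form dz − p dq pulls back to cos(2q) dx − sin(2q) dy. -/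
open Real

/-- The coordinate change Φ(q,x,y) = (q, −2x·sin(2q) − 2y·cos(2q), x·cos(2q) − y·sin(2q)). -/
noncomputable def Phi (w : ℝ × ℝ × ℝ) : ℝ × ℝ × ℝ :=
  (w.1,
   -2 * w.2.1 * Real.sin (2 * w.1) - 2 * w.2.2 * Real.cos (2 * w.1),
   w.2.1 * Real.cos (2 * w.1) - w.2.2 * Real.sin (2 * w.1))

/-!
The `p`-component of `Φ` is the `q`-derivative of its `z`-component `x cos 2q − y sin 2q`, so the
circle over `(x, y)` is sent to the 1-jet of the function `q ↦ x cos 2q − y sin 2q`. Therefore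
`p dq` cancels the `dq`-part of `dz`, and what remains is the differential of `z` in `(x, y)`.
-/

section JetLift

variable {𝕜 E : Type*} [NontriviallyNormedField 𝕜] [NormedAddCommGroup E] [NormedSpace 𝕜 E]

/-- The value at `j` of the standard contact form `dz − p dq` on the 1-jet space `J¹(𝕜)`, whose
points and tangent vectors are written in the coordinates `(q, p, z)`. -/
def contactForm (j : 𝕜 × 𝕜 × 𝕜) : 𝕜 × 𝕜 × 𝕜 →L[𝕜] 𝕜 :=
  (ContinuousLinearMap.snd 𝕜 𝕜 𝕜).comp (ContinuousLinearMap.snd 𝕜 𝕜 (𝕜 × 𝕜)) -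
    j.2.1 • ContinuousLinearMap.fst 𝕜 𝕜 (𝕜 × 𝕜)

/-- The lift to `J¹(𝕜)` of a family `q ↦ z (q, e)` of functions parametrized by `e`: it sends
`(q, e)` to the 1-jet at `q` of the member `e`. The `q`-derivative is encoded as the total
derivative of `z` in the direction `(1, 0)`, hence is `0` where `z` is not differentiable. -/
noncomputable def jetLift (z : 𝕜 × E → 𝕜) (w : 𝕜 × E) : 𝕜 × 𝕜 × 𝕜 :=
  (w.1, fderiv 𝕜 z w (1, 0), z w)

theorem fderiv_jetLift_apply {z : 𝕜 × E → 𝕜} {w : 𝕜 × E}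
    (h : DifferentiableAt 𝕜 (jetLift z) w) (v : 𝕜 × E) :
    fderiv 𝕜 (jetLift z) w v =
      (v.1, fderiv 𝕜 (fun u ↦ fderiv 𝕜 z u (1, 0)) w v, fderiv 𝕜 z w v) := by
  have hp : DifferentiableAt 𝕜 (fun u ↦ fderiv 𝕜 z u (1, 0)) w := h.snd.fst
  have hz : DifferentiableAt 𝕜 z w := h.snd.snd
  have hlift : HasFDerivAt (jetLift z) _ w :=
    hasFDerivAt_fst.prodMk (hp.hasFDerivAt.prodMk hz.hasFDerivAt)
  rw [hlift.fderiv]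
  rfl

theorem contactForm_fderiv_jetLift {z : 𝕜 × E → 𝕜} {w : 𝕜 × E}
    (h : DifferentiableAt 𝕜 (jetLift z) w) (a : 𝕜) (v : E) :
    contactForm (jetLift z w) (fderiv 𝕜 (jetLift z) w (a, v)) = fderiv 𝕜 z w (0, v) := by
  have hsplit : ((a, v) : 𝕜 × E) = a • (1, 0) + (0, v) := by simp
  calc contactForm (jetLift z w) (fderiv 𝕜 (jetLift z) w (a, v))
      = fderiv 𝕜 z w (a, v) - fderiv 𝕜 z w (1, 0) * a := by
        rw [fderiv_jetLift_apply h]; rfl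
    _ = fderiv 𝕜 z w (0, v) := by
        rw [hsplit, map_add, map_smul, smul_eq_mul]; ring

end JetLift

/-- The `z`-component of `Φ`, viewed as the family of functions `q ↦ x cos 2q − y sin 2q`
parametrized by `(x, y)`. -/
noncomputable def trigFamily (w : ℝ × ℝ × ℝ) : ℝ :=
  w.2.1 * cos (2 * w.1) - w.2.2 * sin (2 * w.1)

theorem fderiv_trigFamily_apply (q x y a b c : ℝ) :
    fderiv ℝ trigFamily (q, x, y) (a, b, c) =
      (-2 * x * sin (2 * q) - 2 * y * cos (2 * q)) * a + (cos (2 * q) * b - sin (2 * q) * c) := by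
  have hq : HasFDerivAt (fun w : ℝ × ℝ × ℝ ↦ 2 * w.1) _ (q, x, y) :=
    (hasFDerivAt_fst (𝕜 := ℝ)).const_mul 2
  have hx : HasFDerivAt (fun w : ℝ × ℝ × ℝ ↦ w.2.1) _ (q, x, y) :=
    (hasFDerivAt_snd (𝕜 := ℝ)).fst
  have hy : HasFDerivAt (fun w : ℝ × ℝ × ℝ ↦ w.2.2) _ (q, x, y) :=
    (hasFDerivAt_snd (𝕜 := ℝ)).snd
  have hz : HasFDerivAt trigFamily _ (q, x, y) := (hx.mul hq.cos).sub (hy.mul hq.sin)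
  rw [hz.fderiv]
  simp only [sub_apply, add_apply, smul_apply, ContinuousLinearMap.comp_apply,
    ContinuousLinearMap.coe_fst', ContinuousLinearMap.coe_snd', smul_eq_mul]
  ring

theorem Phi_eq_jetLift : Phi = jetLift trigFamily := by
  funext ⟨q, x, y⟩
  have hp : fderiv ℝ trigFamily (q, x, y) (1, 0) =
      -2 * x * sin (2 * q) - 2 * y * cos (2 * q) :=
    (fderiv_trigFamily_apply q x y 1 0 0).trans (by ring)
  simp only [Phi, jetLift, trigFamily, hp]

theorem differentiable_Phi : Differentiable ℝ Phi := by
  unfold Phi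
  fun_prop

/-- Under the coordinate change Φ, the 1-form dz − p dq pulls back to
cos(2q) dx − sin(2q) dy: with (a',b',c') = DΦ(q,x,y)(a,b,c) and
P = −2x·sin(2q) − 2y·cos(2q), one has c' − P·a' = cos(2q)·b − sin(2q)·c. -/
theorem Phi_pullback_contact_form (q x y a b c : ℝ) :
    (fderiv ℝ Phi (q, x, y) (a, b, c)).2.2 -
      (-2 * x * Real.sin (2 * q) - 2 * y * Real.cos (2 * q)) *
        (fderiv ℝ Phi (q, x, y) (a, b, c)).1 =
      Real.cos (2 * q) * b - Real.sin (2 * q) * c := by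
  have hlift : DifferentiableAt ℝ (jetLift trigFamily) (q, x, y) :=
    Phi_eq_jetLift ▸ differentiable_Phi (q, x, y)
  calc _ = contactForm (Phi (q, x, y)) (fderiv ℝ Phi (q, x, y) (a, b, c)) := rfl
    _ = fderiv ℝ trigFamily (q, x, y) (0, b, c) := by
        rw [Phi_eq_jetLift, contactForm_fderiv_jetLift hlift]
    _ = Real.cos (2 * q) * b - Real.sin (2 * q) * c := by
        rw [fderiv_trigFamily_apply, mul_zero, zero_add]
end
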